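/- arXiv:2311.06085 — 2 statements merged into one kernel-verified Lean document; each statement's English description precedes it below -/
import Mathlib

section
/- Let G = (V,E) be a finite simple graph, Γ a group of automorphisms of G, L = (ℓ_1,…,ℓ_k) a sequence of distinct leaders with stabilizer-chain orbits O_i, and S = S(L) the SST cuts. Define G' = (V', E') by V' = V ∪ {v_{ℓ_i} : i = 1,…,k} (one new node per leader) and E' = E ∪ {{v_{ℓ_i}, f} : f ∈ O_i, i = 1,…,k} (in particular {v_{ℓ_i}, ℓ_i} ∈ E'). Then P(G,S) = {x ∈ ℝ^V : there exists y ∈ ℝ^{k} with (x,y) ∈ P(G') and x_{ℓ_i} + y_{v_{ℓ_i}} = 1 for all i = 1,…,k}, where P(G') is the stable set polytope of G'. -/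
open Finset

/-- The stabilizer chain: `sstChain Γ ℓ 0 = Γ` and
`sstChain Γ ℓ (i+1)` is the pointwise stabilizer of `ℓ i` inside `sstChain Γ ℓ i`. -/
def sstChain {α : Type*} (Γ : Set (Equiv.Perm α)) (ℓ : ℕ → α) : ℕ → Set (Equiv.Perm α)
  | 0 => Γ
  | i + 1 => {γ ∈ sstChain Γ ℓ i | γ (ℓ i) = ℓ i}

/-- The orbit `O_i` of the leader `ℓ i` under the `i`-th group of the stabilizer chain. -/
def sstOrbit {α : Type*} (Γ : Set (Equiv.Perm α)) (ℓ : ℕ → α) (i : ℕ) : Set α :=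
  (fun γ : Equiv.Perm α => γ (ℓ i)) '' sstChain Γ ℓ i

/-- The SST cuts `S(L)`: pairs `(ℓ i, f)` with `f ∈ O_i \ {ℓ i}`, for `i < k`. -/
def sstCuts {α : Type*} (Γ : Set (Equiv.Perm α)) (ℓ : ℕ → α) (k : ℕ) : Set (α × α) :=
  {p | ∃ i < k, p.1 = ℓ i ∧ p.2 ∈ sstOrbit Γ ℓ i ∧ p.2 ≠ ℓ i}

/-- `I` is a stable set of `G`. -/
def IsStableSet {V : Type*} (G : SimpleGraph V) (I : Finset V) : Prop :=
  ∀ u ∈ I, ∀ v ∈ I, ¬ G.Adj u v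

/-- The indicator vector of a finite node set. -/
def indic {V : Type*} [DecidableEq V] (I : Finset V) : V → ℝ :=
  fun v => if v ∈ I then 1 else 0

/-- `P(G,S)`: the convex hull of the indicator vectors of stable sets satisfying
all the SST cuts in `S`. -/
def sstPolytope {V : Type*} [DecidableEq V] (G : SimpleGraph V) (S : Set (V × V)) :
    Set (V → ℝ) :=
  convexHull ℝ
    {x | ∃ I : Finset V, IsStableSet G I ∧ x = indic I ∧ ∀ p ∈ S, x p.2 ≤ x p.1}


/-- The stable set polytope `P(G)`: convex hull of indicator vectors of stable sets. -/
def stablePolytope {V : Type*} [DecidableEq V] (G : SimpleGraph V) : Set (V → ℝ) :=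
  convexHull ℝ {x | ∃ I : Finset V, IsStableSet G I ∧ x = indic I}

/-- The auxiliary graph `G'`: one new node per leader, joined to all members of the
leader's orbit (in particular to the leader itself); `G` is kept as an induced subgraph. -/
def extGraph {V : Type*} (G : SimpleGraph V) (Γ : Set (Equiv.Perm V)) (ℓ : ℕ → V)
    (k : ℕ) : SimpleGraph (V ⊕ Fin k) :=
  SimpleGraph.fromRel (fun p q =>
    match p, q with
    | Sum.inl u, Sum.inl v => G.Adj u v
    | Sum.inl f, Sum.inr i => f ∈ sstOrbit Γ ℓ i.1
    | _, _ => False)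

theorem self_mem_sstOrbit {V : Type*} (Γ : Subgroup (Equiv.Perm V)) (ℓ : ℕ → V) (i : ℕ) :
    ℓ i ∈ sstOrbit (↑Γ : Set (Equiv.Perm V)) ℓ i := by
  have h : ∀ j, (1 : Equiv.Perm V) ∈ sstChain (↑Γ : Set (Equiv.Perm V)) ℓ j := by
    intro j
    induction j with
    | zero => exact Γ.one_mem
    | succ j ih => exact ⟨ih, rfl⟩
  exact ⟨1, h i, rfl⟩

theorem ext_adj_ll {V : Type*} (G : SimpleGraph V) (Γ : Set (Equiv.Perm V)) (ℓ : ℕ → V)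
    (k : ℕ) (u v : V) : (extGraph G Γ ℓ k).Adj (Sum.inl u) (Sum.inl v) ↔ G.Adj u v := by
  simp only [extGraph, SimpleGraph.fromRel_adj]
  constructor
  · rintro ⟨_, h | h⟩
    · exact h
    · exact h.symm
  · intro h
    exact ⟨fun e => h.ne (Sum.inl_injective e), Or.inl h⟩

theorem ext_adj_lr {V : Type*} (G : SimpleGraph V) (Γ : Set (Equiv.Perm V)) (ℓ : ℕ → V)
    (k : ℕ) (u : V) (i : Fin k) :
    (extGraph G Γ ℓ k).Adj (Sum.inl u) (Sum.inr i) ↔ u ∈ sstOrbit Γ ℓ i.1 := by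
  simp [extGraph, SimpleGraph.fromRel_adj]

theorem ext_adj_rr {V : Type*} (G : SimpleGraph V) (Γ : Set (Equiv.Perm V)) (ℓ : ℕ → V)
    (k : ℕ) (i j : Fin k) :
    ¬ (extGraph G Γ ℓ k).Adj (Sum.inr i) (Sum.inr j) := by
  simp [extGraph, SimpleGraph.fromRel_adj]

/-- The extended formulation of `P(G,S)` via the stable set polytope of the auxiliary
graph `G'`: `P(G,S)` is the projection of the face of `P(G')` given by
`x_{ℓ i} + y_{v_{ℓ i}} = 1` for all leaders `ℓ i`. -/
theorem sstPolytope_extendedFormulation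
    {V : Type*} [Fintype V] [DecidableEq V] (G : SimpleGraph V)
    (Γ : Subgroup (Equiv.Perm V))
    (hΓ : ∀ γ ∈ Γ, ∀ u v, G.Adj (γ u) (γ v) ↔ G.Adj u v)
    (k : ℕ) (ℓ : ℕ → V) (hdist : ∀ i < k, ∀ j < k, ℓ i = ℓ j → i = j) :
    sstPolytope G (sstCuts (↑Γ : Set (Equiv.Perm V)) ℓ k)
      = {x : V → ℝ | ∃ y : Fin k → ℝ,
          Sum.elim x y ∈ stablePolytope (extGraph G (↑Γ : Set (Equiv.Perm V)) ℓ k) ∧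
          ∀ i : Fin k, x (ℓ i.1) + y i = 1} := by
  apply Set.Subset.antisymm
  · apply convexHull_min
    · rintro x ⟨I, hI, rfl, hc⟩
      refine ⟨fun i => 1 - indic I (ℓ i.1), ?_, fun i => by ring⟩
      apply subset_convexHull
      refine ⟨I.map ⟨Sum.inl, Sum.inl_injective⟩ ∪
        (Finset.univ.filter (fun i : Fin k => ℓ i.1 ∉ I)).map ⟨Sum.inr, Sum.inr_injective⟩,
        ?_, ?_⟩
      · have key : ∀ f ∈ I, ∀ i : Fin k, f ∈ sstOrbit (↑Γ : Set (Equiv.Perm V)) ℓ i.1 →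
            ℓ i.1 ∈ I := by
          intro f hf i hfi
          by_contra hn
          have h := hc (ℓ i.1, f) ⟨i.1, i.2, rfl, hfi, fun e => hn (e ▸ hf)⟩
          simp only [indic, hf, hn, if_true, if_false] at h
          linarith
        rintro (u | i) hu (v | j) hv
        · rw [ext_adj_ll]
          exact hI u (by simpa using hu) v (by simpa using hv)
        · rw [ext_adj_lr]
          intro h
          have hv' : ℓ j.1 ∉ I := by simpa using hv
          exact hv' (key u (by simpa using hu) j h)
        · rw [SimpleGraph.adj_comm, ext_adj_lr]
          intro h
          have hv' : ℓ i.1 ∉ I := by simpa using hu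
          exact hv' (key v (by simpa using hv) i h)
        · exact ext_adj_rr _ _ _ _ _ _
      · funext w
        rcases w with u | i
        · simp [indic]
        · by_cases h : ℓ i.1 ∈ I <;> simp [indic, h]
    · rintro x ⟨y, hy, hxy⟩ x' ⟨y', hy', hxy'⟩ a b ha hb hab
      refine ⟨a • y + b • y', ?_, ?_⟩
      · have h := (convex_convexHull ℝ _) hy hy' ha hb hab
        rw [show Sum.elim (a • x + b • x') (a • y + b • y') = a • Sum.elim x y + b • Sum.elim x' y' from ?_]
        · exact h

        funext w
        rcases w with u | i <;> simp
      · intro i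
        have h1 := hxy i
        have h2 := hxy' i
        simp only [Pi.add_apply, Pi.smul_apply, smul_eq_mul]
        linear_combination a * h1 + b * h2 + hab
  · rintro x ⟨y, hy, hxy⟩
    have hsub : stablePolytope (extGraph G (↑Γ : Set (Equiv.Perm V)) ℓ k) ⊆
        {z : V ⊕ Fin k → ℝ | (∀ i : Fin k, z (Sum.inl (ℓ i.1)) + z (Sum.inr i) ≤ 1) ∧
          ((∀ i : Fin k, z (Sum.inl (ℓ i.1)) + z (Sum.inr i) = 1) →
            (fun v => z (Sum.inl v)) ∈
              sstPolytope G (sstCuts (↑Γ : Set (Equiv.Perm V)) ℓ k))} := by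
      apply convexHull_min
      · rintro z ⟨J, hJ, rfl⟩
        refine ⟨?_, ?_⟩
        · intro i
          have h : ¬ (Sum.inl (ℓ i.1) ∈ J ∧ Sum.inr i ∈ J) := fun h =>
            hJ _ h.1 _ h.2 ((ext_adj_lr _ _ _ _ _ _).2 (self_mem_sstOrbit Γ ℓ i.1))
          by_cases h1 : Sum.inl (ℓ i.1) ∈ J <;> by_cases h2 : Sum.inr i ∈ J <;>
            simp_all [indic]
        · intro he
          apply subset_convexHull
          refine ⟨Finset.univ.filter (fun v => Sum.inl v ∈ J), ?_, ?_, ?_⟩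
          · intro u hu v hv h
            exact hJ _ (by simpa using hu) _ (by simpa using hv) ((ext_adj_ll _ _ _ _ _ _).2 h)
          · funext v
            simp [indic]
          · rintro ⟨p, f⟩ ⟨i, hi, hp, hf, hne⟩
            simp only at hp hf hne
            subst hp
            have h := he ⟨i, hi⟩
            have hn : ¬ (Sum.inl f ∈ J ∧ Sum.inr (⟨i, hi⟩ : Fin k) ∈ J) := fun h =>
              hJ _ h.1 _ h.2 ((ext_adj_lr _ _ _ _ _ _).2 hf)
            by_cases h1 : Sum.inl (ℓ i) ∈ J <;> by_cases h2 : Sum.inr (⟨i, hi⟩ : Fin k) ∈ J <;>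
              by_cases h3 : Sum.inl f ∈ J <;> simp_all [indic]
      · rw [convex_iff_forall_pos]
        rintro z ⟨hz, hz'⟩ w ⟨hw, hw'⟩ a b ha hb hab
        refine ⟨?_, ?_⟩
        · intro i
          simp only [Pi.add_apply, Pi.smul_apply, smul_eq_mul]
          nlinarith [hz i, hw i]
        · intro he
          simp only [Pi.add_apply, Pi.smul_apply, smul_eq_mul] at he
          have e1 := hz' (fun i => le_antisymm (hz i) (by
            by_contra hlt
            push Not at hlt
            nlinarith [he i, mul_le_mul_of_nonneg_left (hw i) hb.le,
              mul_lt_mul_of_pos_left hlt ha]))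
          have e2 := hw' (fun i => le_antisymm (hw i) (by
            by_contra hlt
            push Not at hlt
            nlinarith [he i, mul_le_mul_of_nonneg_left (hz i) ha.le,
              mul_lt_mul_of_pos_left hlt hb]))
          exact (convex_convexHull ℝ _) e1 e2 ha.le hb.le hab
    exact (hsub hy).2 hxy
end

section
/- Let G = (V,E) be a finite simple graph, let Γ be a group of automorphisms of G preserving node weights c ∈ ℤ^V (i.e., c_{γ(v)} = c_v for all γ ∈ Γ, v ∈ V), let L be a sequence of distinct leaders with stabilizer-chain orbits, and let S = S(L) be the SST cuts. Suppose c_v ≠ 0 for all v ∈ V. Define the graph G' = (V',E') obtained by the deletion and addition operations: V' = V \ {f : (ℓ,f) ∈ S and {ℓ,f} ∈ E}, and E' = {e ∈ E : e ⊆ V'} ∪ {{v,f} : (ℓ,f) ∈ S, f ∈ V', v ∈ V', v ≠ f, {ℓ,v} ∈ E}. Then every stable set I of G' that maximizes Σ_{v∈I} c_v among stable sets of G' is a stable set of G whose weight equals max{Σ_{v∈J} c_v : J stable in G}, and its indicator vector χ_I satisfies all SST cuts in S. -/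
open Finset

/-- The nodes kept by the deletion operation: followers adjacent to their leader
are removed. -/
def keptNodes {V : Type*} (G : SimpleGraph V) (S : Set (V × V)) : Set V :=
  {v | ¬ ∃ l, (l, v) ∈ S ∧ G.Adj l v}

/-- The graph `G'` obtained from `G` by the deletion and addition operations:
its nodes are the kept nodes, its edges are the edges of `G` between kept nodes
together with an edge `{v, f}` for every SST cut `(l, f) ∈ S` with `f` kept and
every kept neighbor `v` of the leader `l`. -/
def presolvedGraph {V : Type*} (G : SimpleGraph V) (S : Set (V × V)) : SimpleGraph V :=
  SimpleGraph.fromRel (fun u v =>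
    u ∈ keptNodes G S ∧ v ∈ keptNodes G S ∧
    (G.Adj u v ∨ ∃ l, (l, v) ∈ S ∧ G.Adj l u))

theorem mem_sstChain_iff {V : Type*} (Γ : Set (Equiv.Perm V)) (ℓ : ℕ → V) (n : ℕ)
    (γ : Equiv.Perm V) :
    γ ∈ sstChain Γ ℓ n ↔ γ ∈ Γ ∧ ∀ i < n, γ (ℓ i) = ℓ i := by
  induction n with
  | zero => simp [sstChain]
  | succ n ih =>
    simp only [sstChain, Set.mem_setOf_eq, ih, Nat.lt_succ_iff_lt_or_eq]
    constructor
    · rintro ⟨⟨h1, h2⟩, h3⟩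
      refine ⟨h1, ?_⟩
      rintro i (h | rfl)
      · exact h2 i h
      · exact h3
    · rintro ⟨h1, h2⟩
      exact ⟨⟨h1, fun i h => h2 i (Or.inl h)⟩, h2 n (Or.inr rfl)⟩

theorem mem_sstOrbit_iff {V : Type*} (Γ : Set (Equiv.Perm V)) (ℓ : ℕ → V) (n : ℕ) (f : V) :
    f ∈ sstOrbit Γ ℓ n ↔ ∃ γ ∈ Γ, (∀ i < n, γ (ℓ i) = ℓ i) ∧ γ (ℓ n) = f := by
  simp only [sstOrbit, Set.mem_image, mem_sstChain_iff, and_assoc]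

/-- Moving along the chain preserves earlier orbits. -/
theorem sstOrbit_smul {V : Type*} (Γ : Subgroup (Equiv.Perm V)) (ℓ : ℕ → V) (i n : ℕ)
    (hin : i ≤ n) (γ : Equiv.Perm V) (hγ : γ ∈ Γ) (hfix : ∀ j < n, γ (ℓ j) = ℓ j) (f : V)
    (hf : f ∈ sstOrbit (Γ : Set (Equiv.Perm V)) ℓ i) :
    γ f ∈ sstOrbit (Γ : Set (Equiv.Perm V)) ℓ i := by
  rw [mem_sstOrbit_iff] at hf ⊢
  obtain ⟨δ, hδ, hδf, rfl⟩ := hf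
  refine ⟨γ * δ, Γ.mul_mem hγ hδ, ?_, rfl⟩
  intro j hj
  rw [Equiv.Perm.mul_apply, hδf j hj, hfix j (by omega)]

theorem exists_sst_rep {V : Type*} [DecidableEq V] (G : SimpleGraph V)
    (c : V → ℤ) (Γ : Subgroup (Equiv.Perm V))
    (hΓ : ∀ γ ∈ Γ, ∀ u v, G.Adj (γ u) (γ v) ↔ G.Adj u v)
    (hΓc : ∀ γ ∈ Γ, ∀ v, c (γ v) = c v) (ℓ : ℕ → V) (J : Finset V) (hJ : IsStableSet G J)
    (n : ℕ) : ∃ J' : Finset V, IsStableSet G J' ∧ ∑ v ∈ J', c v = ∑ v ∈ J, c v ∧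
      ∀ i < n, ∀ f ∈ sstOrbit (Γ : Set (Equiv.Perm V)) ℓ i, f ∈ J' → ℓ i ∈ J' := by
  induction n with
  | zero => exact ⟨J, hJ, rfl, by simp⟩
  | succ n ih =>
    obtain ⟨J', hs, hw, hcut⟩ := ih
    by_cases h : ∃ f ∈ sstOrbit (Γ : Set (Equiv.Perm V)) ℓ n, f ∈ J'
    · obtain ⟨f, hf, hfJ⟩ := h
      obtain ⟨γ, hγ, hfix, rfl⟩ := (mem_sstOrbit_iff _ _ _ _).1 hf
      have hmem : ∀ v, v ∈ J'.map (γ⁻¹).toEmbedding ↔ γ v ∈ J' := by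
        intro v
        simp only [Finset.mem_map, Equiv.coe_toEmbedding]
        constructor
        · rintro ⟨w, hw, rfl⟩
          simpa using hw
        · intro h
          exact ⟨γ v, h, by simp⟩
      refine ⟨J'.map (γ⁻¹).toEmbedding, ?_, ?_, ?_⟩
      · intro u hu v hv huv
        rw [hmem] at hu hv
        exact hs _ hu _ hv ((hΓ γ hγ u v).2 huv)
      · rw [Finset.sum_map, ← hw]
        exact Finset.sum_congr rfl fun v _ => hΓc _ (Γ.inv_mem hγ) v
      · intro i hi g hg hgJ
        rw [hmem] at hgJ ⊢
        rcases Nat.lt_succ_iff_lt_or_eq.1 hi with hi | rfl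
        · rw [hfix i hi]
          exact hcut i hi _ (sstOrbit_smul Γ ℓ i n hi.le γ hγ hfix g hg) hgJ
        · exact hfJ
    · refine ⟨J', hs, hw, ?_⟩
      intro i hi f hf hfJ
      rcases Nat.lt_succ_iff_lt_or_eq.1 hi with hi | rfl
      · exact hcut i hi f hf hfJ
      · exact absurd ⟨f, hf, hfJ⟩ h

open Finset in
/-- SST presolving is correct: if all node weights are nonzero, every maximum-weight
stable set of the presolved graph `G'` is a maximum-weight stable set of `G` whose
indicator vector satisfies all SST cuts. -/
theorem presolvedGraph_optimal_stable_set
    {V : Type*} [Fintype V] [DecidableEq V] (G : SimpleGraph V)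
    (c : V → ℤ) (hc : ∀ v, c v ≠ 0)
    (Γ : Subgroup (Equiv.Perm V))
    (hΓ : ∀ γ ∈ Γ, ∀ u v, G.Adj (γ u) (γ v) ↔ G.Adj u v)
    (hΓc : ∀ γ ∈ Γ, ∀ v, c (γ v) = c v)
    (k : ℕ) (ℓ : ℕ → V) (hdist : ∀ i < k, ∀ j < k, ℓ i = ℓ j → i = j)
    (I : Finset V)
    (hIsub : (↑I : Set V) ⊆ keptNodes G (sstCuts (↑Γ : Set (Equiv.Perm V)) ℓ k))
    (hIstable : IsStableSet (presolvedGraph G (sstCuts (↑Γ : Set (Equiv.Perm V)) ℓ k)) I)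
    (hImax : ∀ J : Finset V,
      (↑J : Set V) ⊆ keptNodes G (sstCuts (↑Γ : Set (Equiv.Perm V)) ℓ k) →
      IsStableSet (presolvedGraph G (sstCuts (↑Γ : Set (Equiv.Perm V)) ℓ k)) J →
      ∑ v ∈ J, c v ≤ ∑ v ∈ I, c v) :
    IsStableSet G I ∧
    (∀ J : Finset V, IsStableSet G J → ∑ v ∈ J, c v ≤ ∑ v ∈ I, c v) ∧
    (∀ p ∈ sstCuts (↑Γ : Set (Equiv.Perm V)) ℓ k, indic I p.2 ≤ indic I p.1) := by
  set S := sstCuts (↑Γ : Set (Equiv.Perm V)) ℓ k with hS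
  have hno : ∀ u ∈ I, ∀ l, (l, u) ∈ S → ¬ G.Adj l u :=
    fun u hu l hl ha => hIsub hu ⟨l, hl, ha⟩
  have hstab : IsStableSet G I := by
    intro u hu v hv huv
    exact hIstable u hu v hv
      ((SimpleGraph.fromRel_adj _ _ _).2 ⟨huv.ne, Or.inl ⟨hIsub hu, hIsub hv, Or.inl huv⟩⟩)
  -- no leader of a follower in `I` has a neighbour in `I`
  have hnbr : ∀ f ∈ I, ∀ l, (l, f) ∈ S → ∀ v ∈ I, ¬ G.Adj l v := by
    intro f hf l hl v hv ha
    have hne : v ≠ f := by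
      rintro rfl
      exact hno v hv l hl ha
    exact hIstable v hv f hf
      ((SimpleGraph.fromRel_adj _ _ _).2
        ⟨hne, Or.inl ⟨hIsub hv, hIsub hf, Or.inr ⟨l, hl, ha⟩⟩⟩)
  refine ⟨hstab, ?_, ?_⟩
  · intro J hJ
    obtain ⟨J', hs, hw, hcut⟩ := exists_sst_rep G c Γ hΓ hΓc ℓ J hJ k
    rw [← hw]
    have hl : ∀ f ∈ J', ∀ l, (l, f) ∈ S → l ∈ J' := by
      rintro f hf l ⟨i, hi, h1, h2, h3⟩
      simp only at h1 h2
      rw [h1]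
      exact hcut i hi f h2 hf
    apply hImax
    · rintro f hf ⟨l, hlf, ha⟩
      exact hs l (hl f hf l hlf) f hf ha
    · intro u hu v hv huv
      rcases (SimpleGraph.fromRel_adj _ _ _).1 huv with ⟨_, ⟨_, _, h | ⟨l, h, ha⟩⟩ | ⟨_, _, h | ⟨l, h, ha⟩⟩⟩
      · exact hs u hu v hv h
      · exact hs l (hl v hv l h) u hu ha
      · exact hs v hv u hu h
      · exact hs l (hl u hu l h) v hv ha
  · rintro ⟨l, f⟩ hp
    have key : f ∈ I → l ∈ I := by
      intro hf
      by_contra hlI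
      have hp' := hp
      obtain ⟨i, hi, h1, h2, h3⟩ := hp'
      simp only at h1 h2 h3
      subst h1
      obtain ⟨γ, hγ, hfix, hγf⟩ := (mem_sstOrbit_iff _ _ _ _).1 h2
      have hcf : c f = c (ℓ i) := by rw [← hγf]; exact hΓc γ hγ _
      have hpos : 0 < c f := by
        have := hImax (I.erase f)
          (fun x hx => hIsub (Finset.mem_of_mem_erase hx))
          (fun u hu v hv => hIstable u (Finset.mem_of_mem_erase hu) v (Finset.mem_of_mem_erase hv))
        have h2 := Finset.add_sum_erase I c hf
        have h3 := hc f
        omega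
      -- leaders of `ℓ i` are earlier leaders, fixed by `γ`, and lead `f` as well
      have hlead : ∀ l', (l', ℓ i) ∈ S → γ l' = l' ∧ (l', f) ∈ S := by
        rintro l' ⟨j, hj, e1, e2, e3⟩
        simp only at e1 e2 e3
        subst e1
        have hji : j < i := by
          rcases lt_trichotomy j i with h | h | h
          · exact h
          · exact absurd (by rw [h]) e3
          · exfalso
            obtain ⟨δ, hδ, hδfix, hδe⟩ := (mem_sstOrbit_iff _ _ _ _).1 e2
            exact e3 (δ.injective ((hδfix i h).trans hδe.symm))
        refine ⟨hfix j hji, j, hj, rfl, ?_, ?_⟩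
        · rw [← hγf]
          exact sstOrbit_smul Γ ℓ j i hji.le γ hγ hfix _ e2
        · intro h
          simp only at h
          exact e3 (γ.injective ((hγf.trans h).trans (hfix j hji).symm))
      have hkept : ℓ i ∈ keptNodes G S := by
        rintro ⟨l', h1, h2⟩
        obtain ⟨e1, e2⟩ := hlead l' h1
        refine hno f hf l' e2 ?_
        have := (hΓ γ hγ _ _).2 h2
        rwa [e1, hγf] at this
      have hnew : ∀ u ∈ I, ¬ (presolvedGraph G S).Adj (ℓ i) u := by
        intro u hu ha
        rcases (SimpleGraph.fromRel_adj _ _ _).1 ha with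
          ⟨_, ⟨_, _, h | ⟨l', h, ha⟩⟩ | ⟨_, _, h | ⟨l', h, ha⟩⟩⟩
        · exact hnbr f hf _ hp u hu h
        · have h' := h
          obtain ⟨j, hj, e1, e2, e3⟩ := h
          simp only at e1 e2 e3
          subst e1
          rcases lt_trichotomy j i with hji | hji | hji
          · have := (hΓ γ hγ _ _).2 ha
            rw [hfix j hji, hγf] at this
            exact hnbr u hu _ h' f hf this
          · subst hji
            exact G.irrefl ha
          · obtain ⟨δ, hδ, hδfix, hδe⟩ := (mem_sstOrbit_iff _ _ _ _).1 e2
            have := (hΓ δ hδ _ _).2 ha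
            rw [hδe, hδfix i hji] at this
            exact hnbr f hf _ hp u hu this.symm
        · exact hnbr f hf _ hp u hu h.symm
        · exact hnbr f hf _ (hlead l' h).2 u hu ha
      have := hImax (insert (ℓ i) I) (by
          intro x hx
          rcases Finset.mem_insert.1 (Finset.mem_coe.1 hx) with rfl | hx
          · exact hkept
          · exact hIsub hx) (by
          intro u hu v hv huv
          rcases Finset.mem_insert.1 hu with rfl | hu
          · rcases Finset.mem_insert.1 hv with rfl | hv
            · exact huv.ne rfl
            · exact hnew v hv huv
          · rcases Finset.mem_insert.1 hv with rfl | hv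
            · exact hnew u hu huv.symm
            · exact hIstable u hu v hv huv)
      rw [Finset.sum_insert hlI] at this
      omega
    simp only [indic]
    by_cases hf : f ∈ I
    · simp [hf, key hf]
    · rw [if_neg hf]
      split_ifs <;> norm_num
end
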